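/- Let 0 < q < 1, let A := f(-q)f(-q^2)/(q^{1/2} f(-q^5) f(-q^10)) and B_4 := f(-q^4)f(-q^8)/(q^2 f(-q^20) f(-q^40)), and set P := A·B_4 and Q := A/B_4. Then (Q^8 + 1/Q^8) - 52(Q^6 + 1/Q^6) - 1024(Q^4 + 1/Q^4) - 3987(Q^2 + 1/Q^2) - (P + 5^2/P)[1076(Q + 1/Q) + 384(Q^3 + 1/Q^3) + 35(Q^5 + 1/Q^5)] - (P^2 + 5^4/P^2)[92(Q^2 + 1/Q^2) + 8(Q^4 + 1/Q^4) + 149] - (P^3 + 5^6/P^3)[12(Q + 1/Q) + (Q^3 + 1/Q^3)] - (P^4 + 5^8/P^4) - 7676 = 0. -/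

import Mathlib

open Real

/-- Ramanujan's theta function `φ(q) = ∑_{n=-∞}^∞ q^(n^2)`. -/
noncomputable def phi (q : ℝ) : ℝ := ∑' n : ℤ, q ^ (n ^ 2)

/-- Ramanujan's theta function `ψ(q) = ∑_{n=0}^∞ q^(n(n+1)/2)`. -/
noncomputable def psi (q : ℝ) : ℝ := ∑' n : ℕ, q ^ (n * (n + 1) / 2)

/-- `fneg q` is Ramanujan's `f(-q) = ∑_{n=-∞}^∞ (-1)^n q^(n(3n-1)/2)`. -/
noncomputable def fneg (q : ℝ) : ℝ := ∑' n : ℤ, (-1 : ℝ) ^ n * q ^ (n * (3 * n - 1) / 2)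

/-!
The Jacobi triple product turns `f`, `φ` and `ψ` into products. The lattice of pairs
`(2u + v, u - 2v)` has index five in `ℤ²` and multiplies `m² + n²` by `5`; splitting the double
series of `φ(-q)²` and `ψ(q)²` along its cosets gives two identities between `f(-q)`, `f(-q²)`,
`f(-q⁵)` and `f(-q¹⁰)`. They say that for the Hauptmodul
`h(q) = f(-q²) f(-q⁵)⁵ / (q f(-q) f(-q¹⁰)⁵)` the functions `h - 4` and `h + 1` are eta quotients,
so that `A² = (h - 4)(h + 1) / h`. Writing `(f(-q²) / f(-q¹⁰))⁶ / q²` in terms of `h(q)` and of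
`h(q²)` gives, after cancelling a positive factor, `h(q) - h(q²) / h(q) - 4 / h(q²) = 2`.

Hence `w = h(q²)` is a root of a quartic over `ℚ(A²)` and of a quartic over `ℚ(B₄²)`, and the
vanishing of their resultant is the relation between `A` and `B₄`.
-/

open Filter Topology Finset

section QPochhammer

/-- The finite `q`-Pochhammer symbol `(a; p)ₙ`. -/
def qPochhammer {R : Type*} [CommRing R] (a p : R) (n : ℕ) : R :=
  ∏ k ∈ range n, (1 - a * p ^ k)

/-- The infinite `q`-Pochhammer symbol `(a; p)_∞`, meaningful for `‖p‖ < 1`. -/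
noncomputable def qPochhammerInf {R : Type*} [CommRing R] [TopologicalSpace R] (a p : R) : R :=
  ∏' k : ℕ, (1 - a * p ^ k)

lemma qPochhammer_zero {R : Type*} [CommRing R] (a p : R) : qPochhammer a p 0 = 1 :=
  prod_range_zero _

lemma qPochhammer_self_succ {R : Type*} [CommRing R] (p : R) (n : ℕ) :
    qPochhammer p p (n + 1) = qPochhammer p p n * (1 - p ^ (n + 1)) := by
  rw [qPochhammer, prod_range_succ, ← qPochhammer, pow_succ']

lemma prod_range_mul {M : Type*} [CommMonoid M] (f : ℕ → M) (m N : ℕ) :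
    ∏ k ∈ range (m * N), f k = ∏ j ∈ range m, ∏ k ∈ range N, f (m * k + j) := by
  induction N with
  | zero => simp
  | succ N ih =>
    rw [Nat.mul_succ, prod_range_add, ih, ← prod_mul_distrib]
    exact prod_congr rfl fun j _ => (prod_range_succ _ _).symm

variable {𝕜 : Type*} [NormedField 𝕜] {p : 𝕜}

lemma norm_pow_lt_one (hp : ‖p‖ < 1) {n : ℕ} (hn : n ≠ 0) : ‖p ^ n‖ < 1 := by
  rw [norm_pow]
  exact pow_lt_one₀ (norm_nonneg p) hp hn

lemma summable_norm_neg_mul_pow (a : 𝕜) (hp : ‖p‖ < 1) : Summable fun k : ℕ => ‖-(a * p ^ k)‖ := by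
  simpa only [norm_neg, norm_mul, norm_pow] using
    (summable_geometric_of_lt_one (norm_nonneg p) hp).mul_left ‖a‖

lemma qPochhammer_self_ne_zero (hp : ‖p‖ < 1) (n : ℕ) : qPochhammer p p n ≠ 0 := by
  refine prod_ne_zero_iff.mpr fun k _ h => ?_
  have hlt := norm_pow_lt_one hp k.succ_ne_zero
  rw [pow_succ', ← sub_eq_zero.mp h, norm_one] at hlt
  exact hlt.false

variable [CompleteSpace 𝕜]

lemma multipliable_one_sub_mul_pow (a : 𝕜) (hp : ‖p‖ < 1) :
    Multipliable fun k : ℕ => 1 - a * p ^ k := by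
  simpa only [sub_eq_add_neg] using
    multipliable_one_add_of_summable (summable_norm_neg_mul_pow a hp)

lemma tendsto_qPochhammer (a : 𝕜) (hp : ‖p‖ < 1) :
    Tendsto (qPochhammer a p) atTop (𝓝 (qPochhammerInf a p)) :=
  (multipliable_one_sub_mul_pow a hp).tendsto_prod_tprod_nat

lemma qPochhammerInf_self_ne_zero (hp : ‖p‖ < 1) : qPochhammerInf p p ≠ 0 := by
  simp only [qPochhammerInf, sub_eq_add_neg]
  refine tprod_one_add_ne_zero_of_summable (fun k => ?_) (summable_norm_neg_mul_pow p hp)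
  rw [← sub_eq_add_neg]
  exact prod_ne_zero_iff.mp (qPochhammer_self_ne_zero hp (k + 1)) k (self_mem_range_succ k)

lemma qPochhammerInf_eq_one_sub_mul (a : 𝕜) (hp : ‖p‖ < 1) :
    qPochhammerInf a p = (1 - a) * qPochhammerInf (a * p) p := by
  have hshift (k : ℕ) : 1 - a * p ^ (k + 1) = 1 - a * p * p ^ k := by ring
  have hm : Multipliable fun k : ℕ => 1 - a * p ^ (k + 1) :=
    (multipliable_one_sub_mul_pow (a * p) hp).congr fun k => (hshift k).symm
  rw [qPochhammerInf, tprod_eq_zero_mul' (f := fun k => 1 - a * p ^ k) hm, pow_zero, mul_one,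
    tprod_congr hshift, qPochhammerInf]

lemma qPochhammerInf_eq_prod_residues (a : 𝕜) (hp : ‖p‖ < 1) {m : ℕ} (hm : m ≠ 0) :
    qPochhammerInf a p = ∏ j ∈ range m, qPochhammerInf (a * p ^ j) (p ^ m) := by
  refine tendsto_nhds_unique
    ((tendsto_qPochhammer a hp).comp (tendsto_id.const_mul_atTop' (Nat.pos_of_ne_zero hm))) ?_
  refine (tendsto_finsetProd _ fun j _ => tendsto_qPochhammer (a * p ^ j)
    (norm_pow_lt_one hp hm)).congr fun N => ?_
  refine ((prod_range_mul _ m N).trans (prod_congr rfl fun j _ => ?_)).symm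
  exact prod_congr rfl fun k _ => by ring

lemma qPochhammerInf_mul_neg (a : 𝕜) (hp : ‖p‖ < 1) :
    qPochhammerInf a p * qPochhammerInf (-a) p = qPochhammerInf (a ^ 2) (p ^ 2) := by
  rw [qPochhammerInf, qPochhammerInf, ← (multipliable_one_sub_mul_pow a hp).tprod_mul
    (multipliable_one_sub_mul_pow (-a) hp)]
  exact tprod_congr fun k => by ring

end QPochhammer

section GaussBinom

/-- The Gaussian binomial coefficient `[M choose j]` evaluated at `p`, given by the `q`-Pascal
rule. -/
def gaussBinom {R : Type*} [CommSemiring R] (p : R) : ℕ → ℕ → R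
  | _, 0 => 1
  | 0, _ + 1 => 0
  | M + 1, j + 1 => gaussBinom p M j + p ^ (j + 1) * gaussBinom p M (j + 1)

lemma gaussBinom_zero_right {R : Type*} [CommSemiring R] (p : R) (M : ℕ) :
    gaussBinom p M 0 = 1 := by
  cases M <;> rfl

lemma gaussBinom_succ_succ {R : Type*} [CommSemiring R] (p : R) (M j : ℕ) :
    gaussBinom p (M + 1) (j + 1) = gaussBinom p M j + p ^ (j + 1) * gaussBinom p M (j + 1) :=
  rfl

lemma gaussBinom_eq_zero_of_lt {R : Type*} [CommSemiring R] (p : R) {M j : ℕ} (h : M < j) :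
    gaussBinom p M j = 0 := by
  induction M generalizing j with
  | zero =>
    obtain ⟨j, rfl⟩ := Nat.exists_eq_add_one_of_ne_zero h.ne'
    rfl
  | succ M ih =>
    obtain ⟨j, rfl⟩ := Nat.exists_eq_add_one_of_ne_zero (Nat.ne_zero_of_lt h)
    rw [gaussBinom_succ_succ, ih (by omega), ih (by omega), mul_zero, add_zero]

theorem prod_one_add_mul_pow_eq_sum_gaussBinom {R : Type*} [CommSemiring R] (p x : R) (M : ℕ) :
    ∏ k ∈ range M, (1 + x * p ^ k) =
      ∑ j ∈ range (M + 1), gaussBinom p M j * (p ^ j.choose 2 * x ^ j) := by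
  induction M generalizing x with
  | zero => simp [gaussBinom_zero_right]
  | succ M ih =>
    have hshift : ∑ j ∈ range (M + 1), gaussBinom p M j * (p ^ j.choose 2 * (x * p) ^ j) =
        ∑ j ∈ range (M + 1),
          gaussBinom p M (j + 1) * (p ^ (j + 1).choose 2 * (x * p) ^ (j + 1)) + 1 := by
      have h := sum_range_succ' (fun j => gaussBinom p M j * (p ^ j.choose 2 * (x * p) ^ j)) (M + 1)
      rw [sum_range_succ, gaussBinom_eq_zero_of_lt p M.lt_succ_self] at h
      simpa [gaussBinom_zero_right] using h
    have hprod : ∏ k ∈ range (M + 1), (1 + x * p ^ k) =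
        (1 + x) * ∏ k ∈ range M, (1 + x * p * p ^ k) := by
      rw [prod_range_succ', pow_zero, mul_one, mul_comm]
      exact congrArg _ (prod_congr rfl fun k _ => by rw [pow_succ', mul_assoc])
    rw [hprod, ih, add_mul, one_mul, sum_range_succ' _ (M + 1), mul_sum]
    nth_rw 1 [hshift]
    rw [add_right_comm, ← sum_add_distrib]
    congr 1
    · refine sum_congr rfl fun j _ => ?_
      rw [gaussBinom_succ_succ, Nat.choose_succ_succ' j 1, Nat.choose_one_right, pow_add]
      ring
    · simp [gaussBinom_zero_right]

lemma gaussBinom_add_mul_qPochhammer {R : Type*} [CommRing R] (p : R) (a b : ℕ) :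
    gaussBinom p (a + b) a * (qPochhammer p p a * qPochhammer p p b) = qPochhammer p p (a + b) := by
  induction a generalizing b with
  | zero => rw [gaussBinom_zero_right, qPochhammer_zero, one_mul, one_mul, zero_add]
  | succ a iha =>
    induction b with
    | zero =>
      have h := iha 0
      rw [add_zero] at h ⊢
      rw [gaussBinom_succ_succ, gaussBinom_eq_zero_of_lt p a.lt_succ_self, qPochhammer_self_succ]
      linear_combination (1 - p ^ (a + 1)) * h
    | succ b ihb =>
      have h := iha (b + 1)
      rw [show a + (b + 1) = a + 1 + b by omega] at h
      rw [← add_assoc (a + 1), gaussBinom_succ_succ, qPochhammer_self_succ p (a + 1 + b)]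
      rw [qPochhammer_self_succ p a] at ihb ⊢
      rw [qPochhammer_self_succ p b] at h ⊢
      linear_combination (1 - p ^ (a + 1)) * h + p ^ (a + 1) * (1 - p ^ (b + 1)) * ihb

variable {𝕜 : Type*} [NormedField 𝕜] {p : 𝕜}

lemma gaussBinom_add_eq_div (hp : ‖p‖ < 1) (a b : ℕ) :
    gaussBinom p (a + b) a =
      qPochhammer p p (a + b) / (qPochhammer p p a * qPochhammer p p b) :=
  eq_div_of_mul_eq (mul_ne_zero (qPochhammer_self_ne_zero hp a) (qPochhammer_self_ne_zero hp b))
    (gaussBinom_add_mul_qPochhammer p a b)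

variable [CompleteSpace 𝕜]

lemma tendsto_gaussBinom_add (hp : ‖p‖ < 1) {ι : Type*} {l : Filter ι} {a b : ι → ℕ}
    (ha : Tendsto a l atTop) (hb : Tendsto b l atTop) :
    Tendsto (fun i => gaussBinom p (a i + b i) (a i)) l (𝓝 (qPochhammerInf p p)⁻¹) := by
  have hlim := tendsto_qPochhammer p hp
  have hne := qPochhammerInf_self_ne_zero hp
  simp only [gaussBinom_add_eq_div hp]
  rw [← div_mul_cancel_left₀ hne (qPochhammerInf p p)]
  exact (hlim.comp (ha.atTop_add_atTop hb)).div ((hlim.comp ha).mul (hlim.comp hb))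
    (mul_ne_zero hne hne)

lemma exists_norm_gaussBinom_le (hp : ‖p‖ < 1) : ∃ C, ∀ M j, ‖gaussBinom p M j‖ ≤ C := by
  have hlim := tendsto_qPochhammer p hp
  obtain ⟨C, hC⟩ := hlim.norm.bddAbove_range
  obtain ⟨D, hD⟩ := (hlim.inv₀ (qPochhammerInf_self_ne_zero hp)).norm.bddAbove_range
  have hC' (n : ℕ) : ‖qPochhammer p p n‖ ≤ C := hC (Set.mem_range_self n)
  have hD' (n : ℕ) : ‖(qPochhammer p p n)⁻¹‖ ≤ D := hD (Set.mem_range_self n)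
  have hC0 : 0 ≤ C := (norm_nonneg _).trans (hC' 0)
  have hD0 : 0 ≤ D := (norm_nonneg _).trans (hD' 0)
  refine ⟨C * (D * D), fun M j => ?_⟩
  rcases lt_or_ge M j with hlt | hle
  · rw [gaussBinom_eq_zero_of_lt p hlt, norm_zero]
    positivity
  · obtain ⟨b, rfl⟩ := Nat.exists_eq_add_of_le hle
    rw [gaussBinom_add_eq_div hp, div_eq_mul_inv, mul_inv, norm_mul, norm_mul]
    gcongr
    exacts [hC' _, hD' _, hD' _]

end GaussBinom

section ThetaSeries

lemma two_mul_triangular (n : ℤ) : 2 * (n * (n - 1) / 2) = n * (n - 1) :=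
  Int.mul_ediv_cancel' (Int.even_mul_pred_self n).two_dvd

/-- The `n`-th term `p ^ (n(n-1)/2) * x ^ n` of the bilateral theta series. -/
def thetaTerm {𝕜 : Type*} [Field 𝕜] (p x : 𝕜) (n : ℤ) : 𝕜 :=
  p ^ (n * (n - 1) / 2) * x ^ n

/-- Jacobi's theta series `∑ p ^ (n(n-1)/2) * x ^ n` over `n : ℤ`, which is Ramanujan's
`f(x, p/x)`. -/
noncomputable def thetaSeries {𝕜 : Type*} [Field 𝕜] [TopologicalSpace 𝕜] (p x : 𝕜) : 𝕜 :=
  ∑' n : ℤ, thetaTerm p x n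

section Field

variable {𝕜 : Type*} [Field 𝕜] {p x : 𝕜}

lemma thetaTerm_ne_zero (hp : p ≠ 0) (hx : x ≠ 0) (n : ℤ) : thetaTerm p x n ≠ 0 :=
  mul_ne_zero (zpow_ne_zero _ hp) (zpow_ne_zero _ hx)

lemma thetaTerm_one (p x : 𝕜) : thetaTerm p x 1 = x := by simp [thetaTerm]

lemma thetaTerm_natCast (p x : 𝕜) (n : ℕ) : thetaTerm p x n = p ^ n.choose 2 * x ^ n := by
  have h : (n : ℤ) * (n - 1) / 2 = (n.choose 2 : ℕ) := by
    rw [Nat.choose_two_right]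
    cases n <;> simp
  rw [thetaTerm, h, zpow_natCast, zpow_natCast]

lemma thetaTerm_add (hp : p ≠ 0) (hx : x ≠ 0) (m n : ℤ) :
    thetaTerm p x (m + n) = thetaTerm p x m * thetaTerm p (x * p ^ m) n := by
  have hexp : (m + n) * (m + n - 1) / 2 = m * (m - 1) / 2 + n * (n - 1) / 2 + m * n := by
    linarith [two_mul_triangular (m + n), two_mul_triangular m, two_mul_triangular n]
  rw [thetaTerm, hexp, zpow_add₀ hx, zpow_add₀ hp, zpow_add₀ hp, zpow_mul, thetaTerm, thetaTerm,
    mul_zpow]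
  ring

lemma thetaTerm_div_self (hp : p ≠ 0) (x : 𝕜) (n : ℤ) :
    thetaTerm p (p / x) n = thetaTerm p x (-n) := by
  have hexp : -n * (-n - 1) / 2 = n * (n - 1) / 2 + n := by
    linarith [two_mul_triangular (-n), two_mul_triangular n]
  rw [thetaTerm, thetaTerm, hexp, zpow_add₀ hp, div_zpow, zpow_neg]
  ring

lemma prod_mul_pow_eq_thetaTerm (hp : p ≠ 0) (hx : x ≠ 0) (N : ℕ) :
    ∏ k ∈ range N, x * p ^ k = thetaTerm p x N := by
  induction N with
  | zero => simp [thetaTerm]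
  | succ N ih =>
    rw [prod_range_succ, ih, Nat.cast_succ, thetaTerm_add hp hx, thetaTerm_one, zpow_natCast]

lemma prod_one_add_eq_thetaTerm_mul_qPochhammer (hp : p ≠ 0) (hx : x ≠ 0) (N : ℕ) :
    ∏ k ∈ range N, (1 + x / p ^ N * p ^ k) =
      thetaTerm p (x / p ^ N) N * qPochhammer (-(p / x)) p N := by
  have hz : x / p ^ N ≠ 0 := div_ne_zero hx (pow_ne_zero N hp)
  rw [← prod_mul_pow_eq_thetaTerm hp hz, qPochhammer, ← prod_range_reflect (fun k => 1 - _ * p ^ k),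
    ← prod_mul_distrib]
  refine prod_congr rfl fun k hk => ?_
  have hpow : p ^ N = p ^ k * p ^ (N - 1 - k) * p := by
    rw [← pow_add, ← pow_succ]
    congr 1
    have := mem_range.mp hk
    omega
  rw [hpow]
  field_simp
  ring

/-- The finite form of the **Jacobi triple product** identity. -/
theorem qPochhammer_mul_qPochhammer_eq_sum_gaussBinom (hp : p ≠ 0) (hx : x ≠ 0) (N : ℕ) :
    qPochhammer (-x) p N * qPochhammer (-(p / x)) p N =
      ∑ n ∈ Icc (-(N : ℤ)) N, gaussBinom p (N + N) (N + n).toNat * thetaTerm p x n := by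
  have hz : x / p ^ N ≠ 0 := div_ne_zero hx (pow_ne_zero N hp)
  have hzx : x / p ^ N * p ^ N = x := div_mul_cancel₀ x (pow_ne_zero N hp)
  have hupper : ∏ k ∈ range N, (1 + x / p ^ N * p ^ (N + k)) = qPochhammer (-x) p N :=
    prod_congr rfl fun k _ => by rw [pow_add, ← mul_assoc, hzx, neg_mul, sub_neg_eq_add]
  have hrothe := prod_one_add_mul_pow_eq_sum_gaussBinom p (x / p ^ N) (N + N)
  rw [prod_range_add, hupper, prod_one_add_eq_thetaTerm_mul_qPochhammer hp hx] at hrothe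
  refine mul_left_cancel₀ (thetaTerm_ne_zero hp hz N) ?_
  rw [mul_left_comm, mul_comm, hrothe, mul_sum]
  refine sum_bij' (fun j _ => (j : ℤ) - N) (fun n _ => (N + n).toNat) ?_ ?_ ?_ ?_ ?_
  · intro j hj
    rw [mem_range] at hj
    rw [mem_Icc]
    omega
  · intro n hn
    rw [mem_Icc] at hn
    rw [mem_range]
    omega
  · intro j _
    simp
  · intro n hn
    rw [mem_Icc] at hn
    omega
  · intro j _
    have hsplit := thetaTerm_add hp hz N (j - N)
    rw [zpow_natCast p N, hzx, add_sub_cancel, thetaTerm_natCast] at hsplit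
    rw [hsplit, add_sub_cancel, Int.toNat_natCast, mul_left_comm]

end Field

variable {𝕜 : Type*} [NormedField 𝕜] {p x : 𝕜}

theorem thetaSeries_div_self (hp : p ≠ 0) (x : 𝕜) : thetaSeries p (p / x) = thetaSeries p x := by
  simp only [thetaSeries, thetaTerm_div_self hp]
  exact (Equiv.neg ℤ).tsum_eq (thetaTerm p x)

theorem thetaSeries_eq_mul_thetaSeries (hp : p ≠ 0) (hx : x ≠ 0) :
    thetaSeries p x = x * thetaSeries p (x * p) := by
  rw [thetaSeries, ← (Equiv.addLeft (1 : ℤ)).tsum_eq, thetaSeries, ← tsum_mul_left]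
  exact tsum_congr fun n => by
    rw [Equiv.coe_addLeft, thetaTerm_add hp hx, thetaTerm_one, zpow_one]

lemma summable_norm_thetaTerm_natCast (hp : p ≠ 0) (hlt : ‖p‖ < 1) (hx : x ≠ 0) :
    Summable fun n : ℕ => ‖thetaTerm p x n‖ := by
  refine summable_of_ratio_test_tendsto_lt_one zero_lt_one
    (.of_forall fun n => norm_ne_zero_iff.mpr (thetaTerm_ne_zero hp hx n)) ?_
  have hratio (n : ℕ) : ‖x‖ * ‖p‖ ^ n =
      ‖‖thetaTerm p x (n + 1 : ℕ)‖‖ / ‖‖thetaTerm p x n‖‖ := by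
    rw [norm_norm, norm_norm, Nat.cast_succ, thetaTerm_add hp hx, thetaTerm_one, norm_mul,
      mul_div_cancel_left₀ _ (norm_ne_zero_iff.mpr (thetaTerm_ne_zero hp hx n)), zpow_natCast,
      norm_mul, norm_pow]
  simpa only [mul_zero, hratio] using
    (tendsto_pow_atTop_nhds_zero_of_lt_one (norm_nonneg p) hlt).const_mul ‖x‖

lemma summable_norm_thetaTerm (hp : p ≠ 0) (hlt : ‖p‖ < 1) (hx : x ≠ 0) :
    Summable fun n : ℤ => ‖thetaTerm p x n‖ := by
  refine .of_nat_of_neg (summable_norm_thetaTerm_natCast hp hlt hx) ?_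
  simpa only [thetaTerm_div_self hp] using
    summable_norm_thetaTerm_natCast hp hlt (div_ne_zero hp hx)

variable [CompleteSpace 𝕜]

lemma tendsto_gaussBinom_centered (hlt : ‖p‖ < 1) (n : ℤ) :
    Tendsto (fun N : ℕ => gaussBinom p (N + N) (N + n).toNat) atTop
      (𝓝 (qPochhammerInf p p)⁻¹) := by
  have htop (m : ℤ) : Tendsto (fun N : ℕ => ((N : ℤ) + m).toNat) atTop atTop :=
    tendsto_atTop.mpr fun b => (eventually_ge_atTop (b + m.natAbs)).mono fun N hN => by omega
  refine (tendsto_gaussBinom_add hlt (htop n) (htop (-n))).congr' ?_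
  filter_upwards [eventually_ge_atTop n.natAbs] with N hN
  congr 1
  omega

/-- The **Jacobi triple product** identity. -/
theorem thetaSeries_eq_qPochhammerInf (hp : p ≠ 0) (hlt : ‖p‖ < 1) (hx : x ≠ 0) :
    thetaSeries p x =
      qPochhammerInf p p * (qPochhammerInf (-x) p * qPochhammerInf (-(p / x)) p) := by
  have hprod := (tendsto_qPochhammer (-x) hlt).mul (tendsto_qPochhammer (-(p / x)) hlt)
  simp only [qPochhammer_mul_qPochhammer_eq_sum_gaussBinom hp hx] at hprod
  obtain ⟨C, hC⟩ := exists_norm_gaussBinom_le hlt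
  have hsum := tendsto_tsum_of_dominated_convergence (β := ℤ)
    ((summable_norm_thetaTerm hp hlt hx).mul_left C)
    (f := fun N : ℕ => Set.indicator (Icc (-(N : ℤ)) N)
      fun n => gaussBinom p (N + N) (N + n).toNat * thetaTerm p x n)
    (fun n => ((tendsto_gaussBinom_centered hlt n).mul_const (thetaTerm p x n)).congr' <| by
      filter_upwards [eventually_ge_atTop n.natAbs] with N hN
      rw [Set.indicator_of_mem]
      rw [coe_Icc, Set.mem_Icc]
      omega)
    (.of_forall fun N n => (norm_indicator_le_norm_self _ n).trans <| by
      rw [norm_mul]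
      exact mul_le_mul_of_nonneg_right (hC _ _) (norm_nonneg _))
  simp only [← sum_eq_tsum_indicator, tsum_mul_left] at hsum
  rw [tendsto_nhds_unique hprod hsum, mul_inv_cancel_left₀ (qPochhammerInf_self_ne_zero hlt),
    thetaSeries]

end ThetaSeries

section QuinticDissection

lemma bijective_fin_five_prod_lattice : Function.Bijective
    fun w : Fin 5 × ℤ × ℤ => (2 * w.2.1 + w.2.2 + (w.1 : ℕ), w.2.1 - 2 * w.2.2) := by
  constructor
  · rintro ⟨c, u, v⟩ ⟨c', u', v'⟩ h
    simp only [Prod.mk.injEq] at h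
    refine Prod.ext (Fin.ext ?_) (Prod.ext ?_ ?_) <;> dsimp only <;> omega
  · rintro ⟨m, n⟩
    refine ⟨(⟨((m - 2 * n) % 5).toNat, by omega⟩,
      ((2 * (m - (m - 2 * n) % 5) + n) / 5, (m - (m - 2 * n) % 5 - 2 * n) / 5)), ?_⟩
    simp only [Prod.mk.injEq]
    omega

lemma tsum_int_prod_eq_sum_cosets {E : Type*} [NormedAddCommGroup E] [CompleteSpace E]
    {F : ℤ × ℤ → E} (hF : Summable F) :
    ∑' z, F z = ∑ c ∈ range 5, ∑' z : ℤ × ℤ, F (2 * z.1 + z.2 + c, z.1 - 2 * z.2) := by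
  let e := Equiv.ofBijective _ bijective_fin_five_prod_lattice
  have he : Summable fun w => F (e w) := e.summable_iff.mpr hF
  rw [← e.tsum_eq F, he.tsum_prod, tsum_fintype, sum_range]
  rfl

lemma thetaTerm_mul_thetaTerm_lattice {𝕜 : Type*} [Field 𝕜] {p x y : 𝕜} (hp : p ≠ 0) (hx : x ≠ 0)
    (hy : y ≠ 0) (c : ℕ) (u v : ℤ) :
    thetaTerm p x (2 * u + v + c) * thetaTerm p y (u - 2 * v) =
      thetaTerm p x c * (thetaTerm (p ^ 5) (p ^ (2 * c + 1) * x ^ 2 * y) u *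
        thetaTerm (p ^ 5) (p ^ (c + 3) * x / y ^ 2) v) := by
  have hp_pow : p ^ ((2 * u + v + c) * (2 * u + v + c - 1) / 2) *
        p ^ ((u - 2 * v) * (u - 2 * v - 1) / 2) =
      p ^ ((c : ℤ) * (c - 1) / 2) * (p ^ 5) ^ (u * (u - 1) / 2) * (p ^ 5) ^ (v * (v - 1) / 2) *
        (p ^ (2 * c + 1)) ^ u * (p ^ (c + 3)) ^ v := by
    simp only [← zpow_natCast, ← zpow_mul, ← zpow_add₀ hp]
    congr 1
    push_cast
    linarith [two_mul_triangular (2 * u + v + c), two_mul_triangular (u - 2 * v),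
      two_mul_triangular c, two_mul_triangular u, two_mul_triangular v]
  have hx_pow : x ^ (2 * u + v + c) = x ^ (c : ℤ) * (x ^ 2) ^ u * x ^ v := by
    rw [zpow_add₀ hx, zpow_add₀ hx, zpow_mul]
    norm_cast
    ring
  have hy_pow : y ^ (u - 2 * v) = y ^ u / (y ^ 2) ^ v := by
    rw [zpow_sub₀ hy, zpow_mul]
    norm_cast
  simp only [thetaTerm, hx_pow, hy_pow, mul_zpow, div_zpow]
  linear_combination x ^ (c : ℤ) * (x ^ 2) ^ u * x ^ v * (y ^ u / (y ^ 2) ^ v) * hp_pow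

variable {𝕜 : Type*} [NormedField 𝕜]

lemma thetaSeries_pow_eq_of_add_eq {r : 𝕜} (hr : r ≠ 0) {m a b : ℕ} (h : a + b = m) :
    thetaSeries (r ^ m) (r ^ a) = thetaSeries (r ^ m) (r ^ b) := by
  rw [← thetaSeries_div_self (pow_ne_zero m hr) (r ^ b), ← h, pow_add,
    mul_div_cancel_right₀ _ (pow_ne_zero b hr)]

lemma pow_mul_thetaSeries_pow_add {r : 𝕜} (hr : r ≠ 0) (m a : ℕ) :
    r ^ a * thetaSeries (r ^ m) (r ^ (a + m)) = thetaSeries (r ^ m) (r ^ a) := by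
  rw [pow_add]
  exact (thetaSeries_eq_mul_thetaSeries (pow_ne_zero m hr) (pow_ne_zero a hr)).symm

variable [CompleteSpace 𝕜]

/-- Splits the double series along the index-five sublattice on which `m² + n² = 5(u² + v²)`. -/
theorem thetaSeries_mul_thetaSeries {p x y : 𝕜} (hp : p ≠ 0) (hlt : ‖p‖ < 1) (hx : x ≠ 0)
    (hy : y ≠ 0) :
    thetaSeries p x * thetaSeries p y =
      ∑ c ∈ range 5, thetaTerm p x c * (thetaSeries (p ^ 5) (p ^ (2 * c + 1) * x ^ 2 * y) *
        thetaSeries (p ^ 5) (p ^ (c + 3) * x / y ^ 2)) := by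
  have hxs := summable_norm_thetaTerm hp hlt hx
  have hys := summable_norm_thetaTerm hp hlt hy
  have hsum {z : 𝕜} (hz : z ≠ 0) :=
    summable_norm_thetaTerm (pow_ne_zero 5 hp) (norm_pow_lt_one hlt (by decide)) hz
  rw [thetaSeries, thetaSeries, tsum_mul_tsum_of_summable_norm hxs hys,
    tsum_int_prod_eq_sum_cosets (hxs.mul_norm hys).of_norm]
  refine sum_congr rfl fun c _ => ?_
  rw [thetaSeries, thetaSeries, tsum_mul_tsum_of_summable_norm (hsum (by positivity))
    (hsum (by positivity)), ← tsum_mul_left]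
  exact tsum_congr fun z => thetaTerm_mul_thetaTerm_lattice hp hx hy c z.1 z.2

variable {r : 𝕜}

lemma thetaSeries_sq_self_sq_eq_sum (hr : r ≠ 0) (hlt : ‖r‖ < 1) :
    thetaSeries (r ^ 2) r ^ 2 = ∑ c ∈ range 5, r ^ (c ^ 2) *
      (thetaSeries (r ^ 10) (r ^ (4 * c + 5)) * thetaSeries (r ^ 10) (r ^ (2 * c + 5))) := by
  rw [sq (thetaSeries _ _), thetaSeries_mul_thetaSeries (pow_ne_zero 2 hr)
    (norm_pow_lt_one hlt two_ne_zero) hr hr]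
  refine sum_congr rfl fun c _ => ?_
  have hcoeff : thetaTerm (r ^ 2) r c = r ^ (c ^ 2) := by
    rw [thetaTerm, ← zpow_natCast r 2, ← zpow_mul, Nat.cast_ofNat, two_mul_triangular,
      ← zpow_add₀ hr, ← zpow_natCast]
    congr 1
    push_cast
    ring
  have harg₁ : (r ^ 2) ^ (2 * c + 1) * r ^ 2 * r = r ^ (4 * c + 5) := by ring
  have harg₂ : (r ^ 2) ^ (c + 3) * r / r ^ 2 = r ^ (2 * c + 5) := by
    rw [div_eq_iff (pow_ne_zero 2 hr)]
    ring
  rw [hcoeff, harg₁, harg₂, ← pow_mul]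

theorem thetaSeries_sq_self_sq (hr : r ≠ 0) (hlt : ‖r‖ < 1) :
    thetaSeries (r ^ 2) r ^ 2 = thetaSeries (r ^ 10) (r ^ 5) ^ 2 +
      4 * r * (thetaSeries (r ^ 10) (r ^ 9) * thetaSeries (r ^ 10) (r ^ 7)) := by
  have h13 : r ^ 3 * thetaSeries (r ^ 10) (r ^ 13) = thetaSeries (r ^ 10) (r ^ 7) :=
    (pow_mul_thetaSeries_pow_add hr 10 3).trans (thetaSeries_pow_eq_of_add_eq hr rfl)
  have h17 : r ^ 7 * thetaSeries (r ^ 10) (r ^ 17) = thetaSeries (r ^ 10) (r ^ 7) :=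
    pow_mul_thetaSeries_pow_add hr 10 7
  have h11 : r ^ 1 * thetaSeries (r ^ 10) (r ^ 11) = thetaSeries (r ^ 10) (r ^ 9) :=
    (pow_mul_thetaSeries_pow_add hr 10 1).trans (thetaSeries_pow_eq_of_add_eq hr rfl)
  have h21 : r ^ 11 * thetaSeries (r ^ 10) (r ^ 21) = thetaSeries (r ^ 10) (r ^ 11) :=
    pow_mul_thetaSeries_pow_add hr 10 11
  rw [thetaSeries_sq_self_sq_eq_sum hr hlt]
  norm_num [sum_range_succ]
  linear_combination
    (r * thetaSeries (r ^ 10) (r ^ 9)) * h13 +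
    ((r ^ 2 * thetaSeries (r ^ 10) (r ^ 11)) * h17 + (r * thetaSeries (r ^ 10) (r ^ 7)) * h11) +
    ((r ^ 5 * thetaSeries (r ^ 10) (r ^ 13)) * h21 + (r ^ 4 * thetaSeries (r ^ 10) (r ^ 13)) * h11 +
      (r * thetaSeries (r ^ 10) (r ^ 9)) * h13)

lemma thetaSeries_self_sq_eq_sum (hr : r ≠ 0) (hlt : ‖r‖ < 1) :
    thetaSeries r r ^ 2 = ∑ c ∈ range 5, r ^ (c + 1).choose 2 *
      (thetaSeries (r ^ 5) (r ^ (2 * c + 4)) * thetaSeries (r ^ 5) (r ^ (c + 2))) := by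
  rw [sq (thetaSeries _ _), thetaSeries_mul_thetaSeries hr hlt hr hr]
  refine sum_congr rfl fun c _ => ?_
  have hcoeff : thetaTerm r r c = r ^ (c + 1).choose 2 := by
    rw [thetaTerm_natCast, ← pow_add, Nat.choose_succ_succ' c 1, Nat.choose_one_right, add_comm]
  have harg₁ : r ^ (2 * c + 1) * r ^ 2 * r = r ^ (2 * c + 4) := by ring
  have harg₂ : r ^ (c + 3) * r / r ^ 2 = r ^ (c + 2) := by
    rw [div_eq_iff (pow_ne_zero 2 hr)]
    ring
  rw [hcoeff, harg₁, harg₂]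

theorem thetaSeries_self_sq (hr : r ≠ 0) (hlt : ‖r‖ < 1) :
    thetaSeries r r ^ 2 = r * thetaSeries (r ^ 5) (r ^ 5) ^ 2 +
      4 * (thetaSeries (r ^ 5) (r ^ 4) * thetaSeries (r ^ 5) (r ^ 2)) := by
  have h3 : thetaSeries (r ^ 5) (r ^ 3) = thetaSeries (r ^ 5) (r ^ 2) :=
    thetaSeries_pow_eq_of_add_eq hr rfl
  have h6 : r ^ 1 * thetaSeries (r ^ 5) (r ^ 6) = thetaSeries (r ^ 5) (r ^ 4) :=
    (pow_mul_thetaSeries_pow_add hr 5 1).trans (thetaSeries_pow_eq_of_add_eq hr rfl)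
  have h7 : r ^ 2 * thetaSeries (r ^ 5) (r ^ 7) = thetaSeries (r ^ 5) (r ^ 2) :=
    pow_mul_thetaSeries_pow_add hr 5 2
  have h8 : r ^ 3 * thetaSeries (r ^ 5) (r ^ 8) = thetaSeries (r ^ 5) (r ^ 2) :=
    (pow_mul_thetaSeries_pow_add hr 5 3).trans h3
  have h10 : r ^ 5 * thetaSeries (r ^ 5) (r ^ 10) = thetaSeries (r ^ 5) (r ^ 5) :=
    pow_mul_thetaSeries_pow_add hr 5 5
  have h12 : r ^ 7 * thetaSeries (r ^ 5) (r ^ 12) = thetaSeries (r ^ 5) (r ^ 7) :=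
    pow_mul_thetaSeries_pow_add hr 5 7
  rw [thetaSeries_self_sq_eq_sum hr hlt]
  norm_num [sum_range_succ, Nat.choose_two_right]
  linear_combination
    thetaSeries (r ^ 5) (r ^ 3) * h6 + thetaSeries (r ^ 5) (r ^ 4) * h3 +
    thetaSeries (r ^ 5) (r ^ 4) * h8 +
    (r * thetaSeries (r ^ 5) (r ^ 5)) * h10 +
    ((r ^ 3 * thetaSeries (r ^ 5) (r ^ 6)) * h12 + (r * thetaSeries (r ^ 5) (r ^ 6)) * h7 +
      thetaSeries (r ^ 5) (r ^ 2) * h6)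

end QuinticDissection

section EulerFunction

/-- Euler's function `(q; q)_∞`, which is Ramanujan's `f(-q)`. -/
noncomputable def eulerFunction {R : Type*} [CommRing R] [TopologicalSpace R] (q : R) : R :=
  qPochhammerInf q q

variable {𝕜 : Type*} [NormedField 𝕜] [CompleteSpace 𝕜] {q : 𝕜}

lemma eulerFunction_ne_zero (hlt : ‖q‖ < 1) : eulerFunction q ≠ 0 :=
  qPochhammerInf_self_ne_zero hlt

/-- Euler's **pentagonal number theorem**. -/
theorem thetaSeries_cube_neg (hq : q ≠ 0) (hlt : ‖q‖ < 1) :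
    thetaSeries (q ^ 3) (-q) = eulerFunction q := by
  have hdiv : -(q ^ 3 / -q) = q ^ 2 := by field_simp
  rw [thetaSeries_eq_qPochhammerInf (pow_ne_zero 3 hq) (norm_pow_lt_one hlt three_ne_zero)
      (neg_ne_zero.mpr hq), hdiv, neg_neg, eulerFunction,
    qPochhammerInf_eq_prod_residues q hlt three_ne_zero]
  simp only [prod_range_succ, prod_range_zero]
  ring_nf

lemma qPochhammerInf_sq_mul_eulerFunction_sq (hlt : ‖q‖ < 1) :
    qPochhammerInf q (q ^ 2) * eulerFunction (q ^ 2) = eulerFunction q := by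
  rw [eulerFunction, eulerFunction, qPochhammerInf_eq_prod_residues q hlt two_ne_zero]
  simp only [prod_range_succ, prod_range_zero]
  ring_nf

lemma qPochhammerInf_neg_mul_eulerFunction (hlt : ‖q‖ < 1) :
    qPochhammerInf (-q) q * eulerFunction q = eulerFunction (q ^ 2) := by
  rw [mul_comm, eulerFunction, eulerFunction, qPochhammerInf_mul_neg q hlt]

theorem thetaSeries_sq_neg_mul (hq : q ≠ 0) (hlt : ‖q‖ < 1) :
    thetaSeries (q ^ 2) (-q) * eulerFunction (q ^ 2) = eulerFunction q ^ 2 := by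
  have hdiv : -(q ^ 2 / -q) = q := by field_simp
  rw [thetaSeries_eq_qPochhammerInf (pow_ne_zero 2 hq) (norm_pow_lt_one hlt two_ne_zero)
      (neg_ne_zero.mpr hq), hdiv, neg_neg, ← qPochhammerInf_sq_mul_eulerFunction_sq hlt,
    eulerFunction]
  ring

theorem thetaSeries_self_mul (hq : q ≠ 0) (hlt : ‖q‖ < 1) :
    thetaSeries q q * eulerFunction q = 2 * eulerFunction (q ^ 2) ^ 2 := by
  rw [thetaSeries_eq_qPochhammerInf hq hlt hq, div_self hq, qPochhammerInf_eq_one_sub_mul (-1) hlt,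
    neg_one_mul, ← qPochhammerInf_neg_mul_eulerFunction hlt, eulerFunction]
  ring

theorem thetaSeries_ten_mul (hq : q ≠ 0) (hlt : ‖q‖ < 1) :
    thetaSeries (q ^ 10) (-q ^ 9) * thetaSeries (q ^ 10) (-q ^ 7) *
        (eulerFunction (q ^ 2) * eulerFunction (q ^ 5)) =
      eulerFunction q * eulerFunction (q ^ 10) ^ 3 := by
  have htriple {a b : ℕ} (hab : a + b = 10) : thetaSeries (q ^ 10) (-q ^ a) =
      eulerFunction (q ^ 10) *
        (qPochhammerInf (q ^ a) (q ^ 10) * qPochhammerInf (q ^ b) (q ^ 10)) := by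
    have hdiv : -(q ^ 10 / -q ^ a) = q ^ b := by
      rw [← hab, div_neg, neg_neg, pow_add, mul_div_cancel_left₀ _ (pow_ne_zero a hq)]
    rw [thetaSeries_eq_qPochhammerInf (pow_ne_zero 10 hq) (norm_pow_lt_one hlt (by decide))
      (neg_ne_zero.mpr (pow_ne_zero a hq)), hdiv, neg_neg, eulerFunction]
  have hresidues := qPochhammerInf_eq_prod_residues q (norm_pow_lt_one hlt two_ne_zero) (m := 5)
    (by decide)
  have h1 := qPochhammerInf_sq_mul_eulerFunction_sq hlt
  have h5 := qPochhammerInf_sq_mul_eulerFunction_sq (q := q ^ 5)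
    (norm_pow_lt_one hlt (by decide))
  simp only [prod_range_succ, prod_range_zero, one_mul, ← pow_mul, ← pow_succ'] at hresidues h5
  norm_num at hresidues h5
  rw [htriple (a := 9) (b := 1) rfl, htriple (a := 7) (b := 3) rfl, ← h1, ← h5, hresidues, pow_one]
  ring

theorem thetaSeries_five_mul (hq : q ≠ 0) (hlt : ‖q‖ < 1) :
    thetaSeries (q ^ 5) (q ^ 4) * thetaSeries (q ^ 5) (q ^ 2) *
        (eulerFunction q * eulerFunction (q ^ 10)) =
      eulerFunction (q ^ 2) * eulerFunction (q ^ 5) ^ 3 := by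
  have htriple {a b : ℕ} (hab : a + b = 5) : thetaSeries (q ^ 5) (q ^ a) =
      eulerFunction (q ^ 5) *
        (qPochhammerInf (-q ^ a) (q ^ 5) * qPochhammerInf (-q ^ b) (q ^ 5)) := by
    have hdiv : q ^ 5 / q ^ a = q ^ b := by
      rw [← hab, pow_add, mul_div_cancel_left₀ _ (pow_ne_zero a hq)]
    rw [thetaSeries_eq_qPochhammerInf (pow_ne_zero 5 hq) (norm_pow_lt_one hlt (by decide))
      (pow_ne_zero a hq), hdiv, eulerFunction]
  have hresidues := qPochhammerInf_eq_prod_residues (-q) hlt (m := 5) (by decide)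
  have h1 := qPochhammerInf_neg_mul_eulerFunction hlt
  have h5 := qPochhammerInf_neg_mul_eulerFunction (q := q ^ 5)
    (norm_pow_lt_one hlt (by decide))
  simp only [prod_range_succ, prod_range_zero, one_mul, neg_mul, ← pow_mul, ← pow_succ']
    at hresidues h5
  norm_num at hresidues h5
  rw [htriple (a := 4) (b := 1) rfl, htriple (a := 2) (b := 3) rfl, ← h1, ← h5, hresidues, pow_one]
  ring

/-- Comes from `φ(-q)² - φ(-q⁵)²`. -/
theorem eulerFunction_phi_identity (hq : q ≠ 0) (hlt : ‖q‖ < 1) :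
    eulerFunction (q ^ 2) ^ 2 * eulerFunction (q ^ 5) ^ 5 =
      eulerFunction q ^ 4 * eulerFunction (q ^ 5) * eulerFunction (q ^ 10) ^ 2 +
        4 * q * (eulerFunction q * eulerFunction (q ^ 2) * eulerFunction (q ^ 10) ^ 5) := by
  have hdissect := thetaSeries_sq_self_sq (neg_ne_zero.mpr hq) (by rwa [norm_neg])
  have hphi1 := thetaSeries_sq_neg_mul hq hlt
  have hphi5 := thetaSeries_sq_neg_mul (pow_ne_zero 5 hq) (norm_pow_lt_one hlt (by decide))
  have hcross := thetaSeries_ten_mul hq hlt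
  rw [← pow_mul] at hphi5
  norm_num at hphi5
  rw [Even.neg_pow (by decide : Even 2), Even.neg_pow (by decide : Even 10),
    Odd.neg_pow (by decide : Odd 5), Odd.neg_pow (by decide : Odd 7),
    Odd.neg_pow (by decide : Odd 9)] at hdissect
  generalize thetaSeries (q ^ 2) (-q) = a at *
  generalize thetaSeries (q ^ 10) (-q ^ 5) = b at *
  generalize thetaSeries (q ^ 10) (-q ^ 9) * thetaSeries (q ^ 10) (-q ^ 7) = c at *
  generalize eulerFunction q = E₁, eulerFunction (q ^ 2) = E₂, eulerFunction (q ^ 5) = E₅,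
    eulerFunction (q ^ 10) = E₁₀ at *
  linear_combination
    -(E₂ ^ 2 * E₅ * (b * E₁₀ + E₅ ^ 2)) * hphi5 + E₅ * E₁₀ ^ 2 * (a * E₂ + E₁ ^ 2) * hphi1
      + 4 * q * E₂ * E₁₀ ^ 2 * hcross - E₂ ^ 2 * E₅ * E₁₀ ^ 2 * hdissect

/-- Comes from `ψ(q)² - q ψ(q⁵)²`. -/
theorem eulerFunction_psi_identity [CharZero 𝕜] (hq : q ≠ 0) (hlt : ‖q‖ < 1) :
    eulerFunction (q ^ 2) ^ 4 * eulerFunction (q ^ 5) ^ 2 * eulerFunction (q ^ 10) =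
      eulerFunction q * eulerFunction (q ^ 2) * eulerFunction (q ^ 5) ^ 5 +
        q * (eulerFunction q ^ 2 * eulerFunction (q ^ 10) ^ 5) := by
  have hdissect := thetaSeries_self_sq hq hlt
  have hpsi1 := thetaSeries_self_mul hq hlt
  have hpsi5 := thetaSeries_self_mul (pow_ne_zero 5 hq) (norm_pow_lt_one hlt (by decide))
  have hcross := thetaSeries_five_mul hq hlt
  rw [← pow_mul] at hpsi5
  norm_num at hpsi5
  generalize thetaSeries q q = a at *
  generalize thetaSeries (q ^ 5) (q ^ 5) = b at *
  generalize thetaSeries (q ^ 5) (q ^ 4) * thetaSeries (q ^ 5) (q ^ 2) = c at *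
  generalize eulerFunction q = E₁, eulerFunction (q ^ 2) = E₂, eulerFunction (q ^ 5) = E₅,
    eulerFunction (q ^ 10) = E₁₀ at *
  linear_combination
    -(E₅ ^ 2 * E₁₀ / 4) * (a * E₁ + 2 * E₂ ^ 2) * hpsi1 + E₁ * E₅ ^ 2 * hcross
      + q * E₁ ^ 2 * E₁₀ / 4 * (b * E₅ + 2 * E₁₀ ^ 2) * hpsi5
      + E₁ ^ 2 * E₅ ^ 2 * E₁₀ / 4 * hdissect

end EulerFunction

section LevelTen

/-- The Hauptmodul `η(2τ) η(5τ)⁵ / (η(τ) η(10τ)⁵)` of level ten, as a function of `q = e^{2πiτ}`. -/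
noncomputable def levelTenHauptmodul {𝕜 : Type*} [NormedField 𝕜] (q : 𝕜) : 𝕜 :=
  eulerFunction (q ^ 2) * eulerFunction (q ^ 5) ^ 5 /
    (q * eulerFunction q * eulerFunction (q ^ 10) ^ 5)

section NormedField

variable {𝕜 : Type*} [NormedField 𝕜] [CompleteSpace 𝕜] {q : 𝕜}

lemma eulerFunction_pow_ne_zero (hlt : ‖q‖ < 1) {n : ℕ} (hn : n ≠ 0) : eulerFunction (q ^ n) ≠ 0 :=
  qPochhammerInf_self_ne_zero (norm_pow_lt_one hlt hn)

lemma levelTenHauptmodul_sub_four (hq : q ≠ 0) (hlt : ‖q‖ < 1) :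
    levelTenHauptmodul q - 4 = eulerFunction q ^ 3 * eulerFunction (q ^ 5) /
      (q * eulerFunction (q ^ 2) * eulerFunction (q ^ 10) ^ 3) := by
  have h₁ := eulerFunction_ne_zero hlt
  have h₂ := eulerFunction_pow_ne_zero hlt two_ne_zero
  have h₁₀ := eulerFunction_pow_ne_zero hlt (n := 10) (by decide)
  rw [levelTenHauptmodul]
  field_simp
  linear_combination eulerFunction_phi_identity hq hlt

lemma levelTenHauptmodul_add_one [CharZero 𝕜] (hq : q ≠ 0) (hlt : ‖q‖ < 1) :
    levelTenHauptmodul q + 1 = eulerFunction (q ^ 2) ^ 4 * eulerFunction (q ^ 5) ^ 2 /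
      (q * eulerFunction q ^ 2 * eulerFunction (q ^ 10) ^ 4) := by
  have h₁ := eulerFunction_ne_zero hlt
  have h₁₀ := eulerFunction_pow_ne_zero hlt (n := 10) (by decide)
  rw [levelTenHauptmodul]
  field_simp
  linear_combination -eulerFunction_psi_identity hq hlt

variable [CharZero 𝕜]

theorem sq_eulerFunction_quotient_eq (hq : q ≠ 0) (hlt : ‖q‖ < 1) :
    (eulerFunction q * eulerFunction (q ^ 2) / (eulerFunction (q ^ 5) * eulerFunction (q ^ 10))) ^ 2
      / q = (levelTenHauptmodul q - 4) * (levelTenHauptmodul q + 1) / levelTenHauptmodul q := by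
  have h₁ := eulerFunction_ne_zero hlt
  have h₂ := eulerFunction_pow_ne_zero hlt two_ne_zero
  have h₅ := eulerFunction_pow_ne_zero hlt (n := 5) (by decide)
  have h₁₀ := eulerFunction_pow_ne_zero hlt (n := 10) (by decide)
  rw [levelTenHauptmodul_sub_four hq hlt, levelTenHauptmodul_add_one hq hlt, levelTenHauptmodul]
  field_simp

theorem eulerFunction_two_div_ten_pow_six_eq (hq : q ≠ 0) (hlt : ‖q‖ < 1) :
    (eulerFunction (q ^ 2) / eulerFunction (q ^ 10)) ^ 6 / q ^ 2 =
      (levelTenHauptmodul q - 4) * (levelTenHauptmodul q + 1) ^ 2 / levelTenHauptmodul q := by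
  have h₁ := eulerFunction_ne_zero hlt
  have h₂ := eulerFunction_pow_ne_zero hlt two_ne_zero
  have h₅ := eulerFunction_pow_ne_zero hlt (n := 5) (by decide)
  have h₁₀ := eulerFunction_pow_ne_zero hlt (n := 10) (by decide)
  rw [levelTenHauptmodul_sub_four hq hlt, levelTenHauptmodul_add_one hq hlt, levelTenHauptmodul]
  field_simp

theorem eulerFunction_one_div_five_pow_six_eq (hq : q ≠ 0) (hlt : ‖q‖ < 1) :
    (eulerFunction q / eulerFunction (q ^ 5)) ^ 6 / q =
      (levelTenHauptmodul q - 4) ^ 2 * (levelTenHauptmodul q + 1) / levelTenHauptmodul q ^ 2 := by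
  have h₁ := eulerFunction_ne_zero hlt
  have h₂ := eulerFunction_pow_ne_zero hlt two_ne_zero
  have h₅ := eulerFunction_pow_ne_zero hlt (n := 5) (by decide)
  have h₁₀ := eulerFunction_pow_ne_zero hlt (n := 10) (by decide)
  rw [levelTenHauptmodul_sub_four hq hlt, levelTenHauptmodul_add_one hq hlt, levelTenHauptmodul]
  field_simp

theorem levelTenHauptmodul_sextic_eq (hq : q ≠ 0) (hlt : ‖q‖ < 1) :
    (levelTenHauptmodul q - 4) * (levelTenHauptmodul q + 1) ^ 2 / levelTenHauptmodul q =
      (levelTenHauptmodul (q ^ 2) - 4) ^ 2 * (levelTenHauptmodul (q ^ 2) + 1) /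
        levelTenHauptmodul (q ^ 2) ^ 2 := by
  rw [← eulerFunction_two_div_ten_pow_six_eq hq hlt, ← eulerFunction_one_div_five_pow_six_eq
    (pow_ne_zero 2 hq) (norm_pow_lt_one hlt two_ne_zero), ← pow_mul]

end NormedField

variable {q : ℝ}

lemma eulerFunction_pos (hq : 0 < q) (hlt : q < 1) : 0 < eulerFunction q := by
  have hnorm : ‖q‖ < 1 := by rwa [Real.norm_of_nonneg hq.le]
  refine (ge_of_tendsto' (tendsto_qPochhammer q hnorm) fun n => ?_).lt_of_ne'
    (eulerFunction_ne_zero hnorm)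
  exact prod_nonneg fun k _ => sub_nonneg.mpr (mul_le_one₀ hlt.le (by positivity)
    (pow_le_one₀ hq.le hlt.le))

lemma levelTenHauptmodul_pos (hq : 0 < q) (hlt : q < 1) : 0 < levelTenHauptmodul q := by
  have hpow {n : ℕ} (hn : n ≠ 0) := eulerFunction_pos (pow_pos hq n) (pow_lt_one₀ hq.le hlt hn)
  have h₁ := eulerFunction_pos hq hlt
  have h₂ := hpow two_ne_zero
  have h₅ := hpow (n := 5) (by decide)
  have h₁₀ := hpow (n := 10) (by decide)
  rw [levelTenHauptmodul]
  positivity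

theorem levelTenHauptmodul_modular_equation (hq : 0 < q) (hlt : q < 1) :
    levelTenHauptmodul q - levelTenHauptmodul (q ^ 2) / levelTenHauptmodul q -
      4 / levelTenHauptmodul (q ^ 2) = 2 := by
  have ht := levelTenHauptmodul_pos hq hlt
  have hs := levelTenHauptmodul_pos (pow_pos hq 2) (pow_lt_one₀ hq.le hlt two_ne_zero)
  have hsextic := levelTenHauptmodul_sextic_eq hq.ne' (by rwa [Real.norm_of_nonneg hq.le])
  generalize levelTenHauptmodul q = t at *
  generalize levelTenHauptmodul (q ^ 2) = s at *
  rw [div_eq_div_iff ht.ne' (pow_pos hs 2).ne'] at hsextic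
  have hfactor : (t ^ 2 * s - s ^ 2 - 4 * t - 2 * (t * s)) * (t * s + 4) = 0 := by
    linear_combination hsextic
  have hrel := (mul_eq_zero.mp hfactor).resolve_right (by positivity)
  field_simp
  linear_combination hrel

theorem fneg_eq_eulerFunction (hq : q ≠ 0) (hlt : ‖q‖ < 1) : fneg q = eulerFunction q := by
  rw [← thetaSeries_cube_neg hq hlt]
  refine tsum_congr fun n => ?_
  have hexp : n * (3 * n - 1) / 2 = 3 * (n * (n - 1) / 2) + n :=
    Int.ediv_eq_of_eq_mul_right two_ne_zero (by linear_combination -3 * two_mul_triangular n)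
  rw [hexp, zpow_add₀ hq, zpow_mul, neg_eq_neg_one_mul q, thetaTerm, mul_zpow, mul_left_comm]
  norm_cast

/-- The quotient written `A` in Ramanujan's modular equations of this level; his `B_n` is its value
at `q ^ n`. -/
noncomputable def levelTenRatio (q : ℝ) : ℝ :=
  fneg q * fneg (q ^ 2) / (q ^ ((1 : ℝ) / 2) * fneg (q ^ 5) * fneg (q ^ 10))

lemma levelTenRatio_pos (hq : 0 < q) (hlt : q < 1) : 0 < levelTenRatio q := by
  have hnorm : ‖q‖ < 1 := by rwa [Real.norm_of_nonneg hq.le]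
  have hpow {n : ℕ} (hn : n ≠ 0) : 0 < fneg (q ^ n) := by
    rw [fneg_eq_eulerFunction (pow_ne_zero n hq.ne') (norm_pow_lt_one hnorm hn)]
    exact eulerFunction_pos (pow_pos hq n) (pow_lt_one₀ hq.le hlt hn)
  have h₁ := hpow one_ne_zero
  have h₂ := hpow two_ne_zero
  have h₅ := hpow (n := 5) (by decide)
  have h₁₀ := hpow (n := 10) (by decide)
  rw [pow_one] at h₁
  rw [levelTenRatio]
  positivity

theorem levelTenRatio_sq (hq : 0 < q) (hlt : q < 1) :
    levelTenRatio q ^ 2 = levelTenHauptmodul q - 3 - 4 / levelTenHauptmodul q := by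
  have hnorm : ‖q‖ < 1 := by rwa [Real.norm_of_nonneg hq.le]
  have hfneg {n : ℕ} (hn : n ≠ 0) : fneg (q ^ n) = eulerFunction (q ^ n) :=
    fneg_eq_eulerFunction (pow_ne_zero n hq.ne') (norm_pow_lt_one hnorm hn)
  have hsq : (q ^ ((1 : ℝ) / 2)) ^ 2 = q := by
    rw [← sqrt_eq_rpow, sq_sqrt hq.le]
  have ht := levelTenHauptmodul_pos hq hlt
  calc levelTenRatio q ^ 2
      = (eulerFunction q * eulerFunction (q ^ 2) /
          (eulerFunction (q ^ 5) * eulerFunction (q ^ 10))) ^ 2 / q := by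
        rw [levelTenRatio, fneg_eq_eulerFunction hq.ne' hnorm, hfneg two_ne_zero, hfneg (by decide),
          hfneg (by decide), mul_assoc, div_pow, mul_pow (q ^ _), hsq, div_pow, div_div, mul_comm q]
    _ = (levelTenHauptmodul q - 4) * (levelTenHauptmodul q + 1) / levelTenHauptmodul q :=
        sq_eulerFunction_quotient_eq hq.ne' hnorm
    _ = levelTenHauptmodul q - 3 - 4 / levelTenHauptmodul q := by
        field_simp
        ring

end LevelTen

section Elimination

/-- The Bézout matrix of the quartics `∑ aᵢ wⁱ` and `∑ bᵢ wⁱ`; its determinant is their resultant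
up to sign. -/
def bezoutMatrix {R : Type*} [CommRing R] (a b : Fin 5 → R) : Matrix (Fin 4) (Fin 4) R :=
  let m i j := a i * b j - a j * b i
  !![m 0 1, m 0 2, m 0 3, m 0 4;
     m 0 2, m 0 3 + m 1 2, m 0 4 + m 1 3, m 1 4;
     m 0 3, m 0 4 + m 1 3, m 1 4 + m 2 3, m 2 4;
     m 0 4, m 1 4, m 2 4, m 3 4]

lemma det_fin_four {R : Type*} [CommRing R] (M : Matrix (Fin 4) (Fin 4) R) :
    M.det =
      M 0 0 * (M.submatrix ![1, 2, 3] ![1, 2, 3]).det -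
        M 0 1 * (M.submatrix ![1, 2, 3] ![0, 2, 3]).det +
        M 0 2 * (M.submatrix ![1, 2, 3] ![0, 1, 3]).det -
        M 0 3 * (M.submatrix ![1, 2, 3] ![0, 1, 2]).det := by
  have hrows : (Fin.succ : Fin 3 → Fin 4) = ![1, 2, 3] := by decide
  have hcol₀ : (Fin.succAbove 0 : Fin 3 → Fin 4) = ![1, 2, 3] := by decide
  have hcol₁ : (Fin.succAbove 1 : Fin 3 → Fin 4) = ![0, 2, 3] := by decide
  have hcol₂ : (Fin.succAbove 2 : Fin 3 → Fin 4) = ![0, 1, 3] := by decide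
  have hcol₃ : (Fin.succAbove 3 : Fin 3 → Fin 4) = ![0, 1, 2] := by decide
  rw [Matrix.det_succ_row_zero, Fin.sum_univ_four, hrows, hcol₀, hcol₁, hcol₂, hcol₃]
  change (-1) ^ 0 * _ * _ + (-1) ^ 1 * _ * _ + (-1) ^ 2 * _ * _ + (-1) ^ 3 * _ * _ = _
  ring

lemma bezoutMatrix_mulVec_pow {R : Type*} [CommRing R] {a b : Fin 5 → R} {w : R}
    (ha : ∑ i, a i * w ^ (i : ℕ) = 0) (hb : ∑ i, b i * w ^ (i : ℕ) = 0) :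
    (bezoutMatrix a b).mulVec (fun j => w ^ (j : ℕ)) = 0 := by
  simp only [Fin.sum_univ_five, Fin.coe_ofNat_eq_mod, Nat.reduceMod] at ha hb
  ext i
  fin_cases i <;>
    simp only [bezoutMatrix, Matrix.mulVec, dotProduct, Fin.sum_univ_four, Matrix.of_apply,
      Matrix.cons_val, Fin.reduceFinMk, Fin.coe_ofNat_eq_mod, Nat.reduceMod, Pi.zero_apply]
  · linear_combination (b 1 + b 2 * w + b 3 * w ^ 2 + b 4 * w ^ 3) * ha -
      (a 1 + a 2 * w + a 3 * w ^ 2 + a 4 * w ^ 3) * hb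
  · linear_combination (b 2 + b 3 * w + b 4 * w ^ 2) * ha - (a 2 + a 3 * w + a 4 * w ^ 2) * hb
  · linear_combination (b 3 + b 4 * w) * ha - (a 3 + a 4 * w) * hb
  · linear_combination b 4 * ha - a 4 * hb

theorem det_bezoutMatrix_eq_zero {R : Type*} [CommRing R] {a b : Fin 5 → R} {w : R}
    (ha : ∑ i, a i * w ^ (i : ℕ) = 0) (hb : ∑ i, b i * w ^ (i : ℕ) = 0) :
    (bezoutMatrix a b).det = 0 := by
  have hker := congrArg (bezoutMatrix a b).adjugate.mulVec (bezoutMatrix_mulVec_pow ha hb)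
  rw [Matrix.mulVec_mulVec, Matrix.adjugate_mul, Matrix.smul_mulVec, Matrix.one_mulVec,
    Matrix.mulVec_zero] at hker
  simpa using congrFun hker 0

variable {K : Type*} [Field K]

lemma quartic_of_modular_equation {w v y : K} (hw : w ≠ 0) (hv : v ≠ 0)
    (h : w - v / w - 4 / v = 2) (hy : y = v - 3 - 4 / v) :
    w ^ 4 + (y - 1) * w ^ 3 - 3 * (y + 3) * w ^ 2 - (y ^ 2 + 4 * y + 11) * w - 4 = 0 := by
  have hrel : v ^ 2 - (w ^ 2 - 2 * w) * v + 4 * w = 0 := by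
    field_simp at h
    linear_combination -h
  subst hy
  field_simp
  linear_combination (-w * v ^ 2 + (2 * w - w ^ 2) * v - 4) * hrel

/-- The modular equation is invariant under `(t, w) ↦ (-4/w, -4/t)`, which fixes `t - 3 - 4/t`. -/
lemma reciprocal_quartic_of_modular_equation [NeZero (4 : K)] {t w x : K} (ht : t ≠ 0) (hw : w ≠ 0)
    (h : t - w / t - 4 / w = 2) (hx : x = t - 3 - 4 / t) :
    w ^ 4 - (x ^ 2 + 4 * x + 11) * w ^ 3 + 12 * (x + 3) * w ^ 2 + 16 * (x - 1) * w - 64 = 0 := by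
  have h4 : (4 : K) ≠ 0 := NeZero.ne _
  have hquartic := quartic_of_modular_equation (w := -4 / w) (v := -4 / t) (y := x)
    (div_ne_zero (neg_ne_zero.mpr h4) hw) (div_ne_zero (neg_ne_zero.mpr h4) ht)
    (by rw [← h]; field_simp; ring) (by rw [hx]; field_simp; ring)
  field_simp at hquartic
  refine mul_left_cancel₀ h4 ?_
  linear_combination -hquartic

theorem symmetric_relation_of_common_root [CharZero K] {x y w : K}
    (hx : w ^ 4 - (x ^ 2 + 4 * x + 11) * w ^ 3 + 12 * (x + 3) * w ^ 2 + 16 * (x - 1) * w - 64 = 0)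
    (hy : w ^ 4 + (y - 1) * w ^ 3 - 3 * (y + 3) * w ^ 2 - (y ^ 2 + 4 * y + 11) * w - 4 = 0) :
    (x + y) ^ 8 - 60 * (x + y) ^ 6 * (x * y) - 292 * (x + y) ^ 4 * (x * y) ^ 2
      + 2625 * (x + y) ^ 2 * (x * y) ^ 3 - 3844 * (x * y) ^ 4
      - (x * y + 25) * (35 * (x + y) ^ 5 * (x * y) + 134 * (x + y) ^ 3 * (x * y) ^ 2
          - 576 * (x + y) * (x * y) ^ 3)
      - (x * y + 25) ^ 2 * (8 * (x + y) ^ 4 * (x * y) + 60 * (x + y) ^ 2 * (x * y) ^ 2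
          - 119 * (x * y) ^ 3)
      - (x * y + 25) ^ 3 * ((x + y) ^ 3 * (x * y) + 9 * (x + y) * (x * y) ^ 2)
      - (x * y + 25) ^ 4 * (x * y) ^ 2 = 0 := by
  have hdet := det_bezoutMatrix_eq_zero (w := w)
    (a := ![-64, 16 * (x - 1), 12 * (x + 3), -(x ^ 2 + 4 * x + 11), 1])
    (b := ![-4, -(y ^ 2 + 4 * y + 11), -3 * (y + 3), y - 1, 1])
    (by
      simp only [Fin.sum_univ_five, Matrix.cons_val, Fin.coe_ofNat_eq_mod, Nat.reduceMod]
      linear_combination hx)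
    (by
      simp only [Fin.sum_univ_five, Matrix.cons_val, Fin.coe_ofNat_eq_mod, Nat.reduceMod]
      linear_combination hy)
  simp only [det_fin_four, Matrix.det_fin_three, bezoutMatrix, Matrix.submatrix_apply,
    Matrix.of_apply, Matrix.cons_val] at hdet
  linear_combination (-1 / 64) * hdet

theorem modular_relation_of_common_root [CharZero K] {A B w : K} (hA : A ≠ 0) (hB : B ≠ 0)
    (hx : w ^ 4 - ((A ^ 2) ^ 2 + 4 * A ^ 2 + 11) * w ^ 3 + 12 * (A ^ 2 + 3) * w ^ 2
      + 16 * (A ^ 2 - 1) * w - 64 = 0)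
    (hy : w ^ 4 + (B ^ 2 - 1) * w ^ 3 - 3 * (B ^ 2 + 3) * w ^ 2
      - ((B ^ 2) ^ 2 + 4 * B ^ 2 + 11) * w - 4 = 0)
    {U V : K} (hU : U = A / B + B / A) (hV : V = A * B + 25 / (A * B)) :
    U ^ 8 - 60 * U ^ 6 - 292 * U ^ 4 + 2625 * U ^ 2 - 3844
      - V * (35 * U ^ 5 + 134 * U ^ 3 - 576 * U) - V ^ 2 * (8 * U ^ 4 + 60 * U ^ 2 - 119)
      - V ^ 3 * (U ^ 3 + 9 * U) - V ^ 4 = 0 := by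
  have hrel := symmetric_relation_of_common_root hx hy
  have hAB : A * B ≠ 0 := mul_ne_zero hA hB
  have hsum : A ^ 2 + B ^ 2 = A * B * U := by rw [hU]; field_simp
  have hprod : A ^ 2 * B ^ 2 = (A * B) ^ 2 := (mul_pow A B 2).symm
  have hprod_add : (A * B) ^ 2 + 25 = A * B * V := by rw [hV]; field_simp
  rw [hsum, hprod, hprod_add] at hrel
  refine mul_left_cancel₀ (pow_ne_zero 8 hAB) ?_
  linear_combination hrel

lemma ramanujan_expression_eq {P Q : K} (hP : P ≠ 0) (hQ : Q ≠ 0) {U V : K} (hU : U = Q + 1 / Q)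
    (hV : V = P + 25 / P) :
    (Q ^ 8 + 1 / Q ^ 8) - 52 * (Q ^ 6 + 1 / Q ^ 6) - 1024 * (Q ^ 4 + 1 / Q ^ 4)
      - 3987 * (Q ^ 2 + 1 / Q ^ 2)
      - (P + 5 ^ 2 / P) * (1076 * (Q + 1 / Q) + 384 * (Q ^ 3 + 1 / Q ^ 3)
          + 35 * (Q ^ 5 + 1 / Q ^ 5))
      - (P ^ 2 + 5 ^ 4 / P ^ 2) * (92 * (Q ^ 2 + 1 / Q ^ 2)
          + 8 * (Q ^ 4 + 1 / Q ^ 4) + 149)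
      - (P ^ 3 + 5 ^ 6 / P ^ 3) * (12 * (Q + 1 / Q) + (Q ^ 3 + 1 / Q ^ 3))
      - (P ^ 4 + 5 ^ 8 / P ^ 4) - 7676 =
    U ^ 8 - 60 * U ^ 6 - 292 * U ^ 4 + 2625 * U ^ 2 - 3844
      - V * (35 * U ^ 5 + 134 * U ^ 3 - 576 * U) - V ^ 2 * (8 * U ^ 4 + 60 * U ^ 2 - 119)
      - V ^ 3 * (U ^ 3 + 9 * U) - V ^ 4 := by
  have hU₂ : Q ^ 2 + 1 / Q ^ 2 = U ^ 2 - 2 := by rw [hU]; field_simp; ring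
  have hU₃ : Q ^ 3 + 1 / Q ^ 3 = U ^ 3 - 3 * U := by rw [hU]; field_simp; ring
  have hU₄ : Q ^ 4 + 1 / Q ^ 4 = U ^ 4 - 4 * U ^ 2 + 2 := by rw [hU]; field_simp; ring
  have hU₅ : Q ^ 5 + 1 / Q ^ 5 = U ^ 5 - 5 * U ^ 3 + 5 * U := by rw [hU]; field_simp; ring
  have hU₆ : Q ^ 6 + 1 / Q ^ 6 = U ^ 6 - 6 * U ^ 4 + 9 * U ^ 2 - 2 := by
    rw [hU]; field_simp; ring
  have hU₈ : Q ^ 8 + 1 / Q ^ 8 = U ^ 8 - 8 * U ^ 6 + 20 * U ^ 4 - 16 * U ^ 2 + 2 := by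
    rw [hU]; field_simp; ring
  have hV₁ : P + 5 ^ 2 / P = V := by rw [hV]; norm_num
  have hV₂ : P ^ 2 + 5 ^ 4 / P ^ 2 = V ^ 2 - 50 := by rw [hV]; field_simp; ring
  have hV₃ : P ^ 3 + 5 ^ 6 / P ^ 3 = V ^ 3 - 75 * V := by rw [hV]; field_simp; ring
  have hV₄ : P ^ 4 + 5 ^ 8 / P ^ 4 = V ^ 4 - 100 * V ^ 2 + 1250 := by
    rw [hV]; field_simp; ring
  rw [hU₂, hU₃, hU₄, hU₅, hU₆, hU₈, hV₁, hV₂, hV₃, hV₄, ← hU]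
  ring

end Elimination

theorem stmt_6 (q A B₄ P Q : ℝ) (hq0 : 0 < q) (hq1 : q < 1)
    (hA : A = fneg q * fneg (q ^ 2) /
      (q ^ ((1 : ℝ) / 2) * fneg (q ^ 5) * fneg (q ^ 10)))
    (hB : B₄ = fneg (q ^ 4) * fneg (q ^ 8) /
      (q ^ 2 * fneg (q ^ 20) * fneg (q ^ 40)))
    (hP : P = A * B₄) (hQ : Q = A / B₄) :
    (Q ^ 8 + 1 / Q ^ 8) - 52 * (Q ^ 6 + 1 / Q ^ 6) - 1024 * (Q ^ 4 + 1 / Q ^ 4)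
      - 3987 * (Q ^ 2 + 1 / Q ^ 2)
      - (P + 5 ^ 2 / P) * (1076 * (Q + 1 / Q) + 384 * (Q ^ 3 + 1 / Q ^ 3)
          + 35 * (Q ^ 5 + 1 / Q ^ 5))
      - (P ^ 2 + 5 ^ 4 / P ^ 2) * (92 * (Q ^ 2 + 1 / Q ^ 2)
          + 8 * (Q ^ 4 + 1 / Q ^ 4) + 149)
      - (P ^ 3 + 5 ^ 6 / P ^ 3) * (12 * (Q + 1 / Q) + (Q ^ 3 + 1 / Q ^ 3))
      - (P ^ 4 + 5 ^ 8 / P ^ 4) - 7676 = 0 := by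
  have hq2 : q ^ 2 < 1 := pow_lt_one₀ hq0.le hq1 two_ne_zero
  have hq4 : q ^ 4 < 1 := pow_lt_one₀ hq0.le hq1 four_ne_zero
  have hsqrt : (q ^ 4) ^ ((1 : ℝ) / 2) = q ^ 2 := by
    rw [← sqrt_eq_rpow, show q ^ 4 = (q ^ 2) ^ 2 by ring, sqrt_sq (sq_nonneg q)]
  replace hA : A = levelTenRatio q := hA
  replace hB : B₄ = levelTenRatio (q ^ 4) := by
    rw [hB, levelTenRatio, hsqrt, ← pow_mul, ← pow_mul, ← pow_mul]
  have hA0 : A ≠ 0 := hA ▸ (levelTenRatio_pos hq0 hq1).ne'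
  have hB0 : B₄ ≠ 0 := hB ▸ (levelTenRatio_pos (pow_pos hq0 4) hq4).ne'
  have hw := levelTenHauptmodul_pos (pow_pos hq0 2) hq2
  have hquarticA := reciprocal_quartic_of_modular_equation (levelTenHauptmodul_pos hq0 hq1).ne'
    hw.ne' (levelTenHauptmodul_modular_equation hq0 hq1) (levelTenRatio_sq hq0 hq1)
  have hmodular := levelTenHauptmodul_modular_equation (pow_pos hq0 2) hq2
  rw [← pow_mul] at hmodular
  have hquarticB := quartic_of_modular_equation hw.ne'
    (levelTenHauptmodul_pos (pow_pos hq0 4) hq4).ne' hmodular (levelTenRatio_sq (pow_pos hq0 4) hq4)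
  rw [← hA] at hquarticA
  rw [← hB] at hquarticB
  rw [ramanujan_expression_eq (hP ▸ mul_ne_zero hA0 hB0) (hQ ▸ div_ne_zero hA0 hB0) rfl rfl]
  exact modular_relation_of_common_root hA0 hB0 hquarticA hquarticB
    (by rw [hQ, one_div_div]) (by rw [hP])
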